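/- arXiv:2510.17112 — 2 statements merged into one kernel-verified Lean document; each statement's English description precedes it below -/
import Mathlib

section
/- For every real α > 0 and every positive integer m, the Minkowski dimension of H^α_m equals 1 − (α/(1+α))^m; equivalently, lim_{δ→0⁺} log λ(V_δ(H^α_m)) / log δ = (α/(1+α))^m. -/
open MeasureTheory Filter Set

/-- The closed `δ`-neighbourhood `V_δ(Ω) = {x : ∃ y ∈ Ω, |x - y| ≤ δ}`. -/
def closedNbhd (Ω : Set ℝ) (δ : ℝ) : Set ℝ := {x : ℝ | ∃ y ∈ Ω, |x - y| ≤ δ}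

/-- `H^α = {1/n^α : n ∈ ℕ, n ≥ 1} ∪ {0}`. -/
noncomputable def Hset (α : ℝ) : Set ℝ :=
  {0} ∪ {x : ℝ | ∃ n : ℕ, 0 < n ∧ x = 1 / (n : ℝ) ^ α}

/-- `H^α_m = H^α + ⋯ + H^α` (`m`-fold arithmetic sumset). -/
noncomputable def HsumSet (α : ℝ) (m : ℕ) : Set ℝ :=
  {x : ℝ | ∃ a : Fin m → ℝ, (∀ i, a i ∈ Hset α) ∧ x = ∑ i, a i}

lemma Hset_zero (α : ℝ) : (0:ℝ) ∈ Hset α := Or.inl rfl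

lemma Hset_greedy (α : ℝ) (hα : 0 < α) (x : ℝ) (hx0 : 0 ≤ x) (hx1 : x ≤ 1) :
    ∃ h ∈ Hset α, h ≤ x ∧ x - h ≤ α * x ^ ((1 + α) / α) := by
  rcases hx0.eq_or_lt with rfl | hx
  · exact ⟨0, Hset_zero α, le_rfl, by simp; positivity⟩
  set t : ℝ := x ^ (-(1/α)) with ht
  have ht0 : 0 < t := Real.rpow_pos_of_pos hx _
  have ht1 : 1 ≤ t := Real.one_le_rpow_of_pos_of_le_one_of_nonpos hx hx1 (by
    have : 0 < 1/α := by positivity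
    linarith)
  have htx : t ^ (-α) = x := by
    rw [ht, ← Real.rpow_mul hx.le]
    have : -(1/α) * -α = 1 := by field_simp
    rw [this, Real.rpow_one]
  have hn1 : t ≤ (⌈t⌉₊ : ℝ) := Nat.le_ceil t
  have hn2 : (⌈t⌉₊ : ℝ) ≤ t + 1 := (Nat.ceil_lt_add_one ht0.le).le
  have hn0 : 0 < (⌈t⌉₊ : ℝ) := by linarith
  have e1 : 1 / ((⌈t⌉₊ : ℝ)) ^ α = (⌈t⌉₊ : ℝ) ^ (-α) := by
    rw [Real.rpow_neg hn0.le, one_div]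
  refine ⟨1 / ((⌈t⌉₊ : ℝ)) ^ α, Or.inr ⟨⌈t⌉₊, by exact_mod_cast hn0, rfl⟩, ?_, ?_⟩
  · rw [e1]
    conv_rhs => rw [← htx]
    exact Real.rpow_le_rpow_of_nonpos ht0 hn1 (by linarith)
  · have h2 : (t+1) ^ (-α) ≤ (⌈t⌉₊ : ℝ) ^ (-α) :=
      Real.rpow_le_rpow_of_nonpos hn0 hn2 (by linarith)
    have h3 : t + 1 = t * (1 + 1/t) := by field_simp
    have h4 : (t+1) ^ (-α) = x * (1+1/t) ^ (-α) := by
      rw [h3, Real.mul_rpow ht0.le (by positivity), htx]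
    have h5 : 1 - α * (1/t) ≤ (1+1/t) ^ (-α) := by
      have hp : 0 < 1 + 1/t := by positivity
      rw [Real.rpow_def_of_pos hp]
      have hl : Real.log (1+1/t) ≤ 1/t := by
        have := Real.log_le_sub_one_of_pos hp
        linarith
      have := Real.add_one_le_exp (Real.log (1+1/t) * -α)
      nlinarith
    have h6 : x ^ ((1+α)/α) = x * (1/t) := by
      have : (1+α)/α = 1 + 1/α := by field_simp; ring
      rw [this, Real.rpow_add hx, Real.rpow_one, ht, Real.rpow_neg hx.le]
      simp
    rw [e1, h6]
    have h7 := mul_le_mul_of_nonneg_left h5 hx.le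
    nlinarith

lemma lower_cover (α : ℝ) (hα : 0 < α) (m : ℕ) : ∃ c : ℝ, 0 < c ∧ ∀ δ : ℝ, 0 < δ → δ ≤ 1 →
    ∀ x : ℝ, 0 ≤ x → x ≤ c * δ ^ ((α / (1 + α)) ^ m) → ∃ y ∈ HsumSet α m, y ≤ x ∧ x - y ≤ δ := by
  induction m with
  | zero =>
    refine ⟨1, one_pos, fun δ h0 h1 x hx0 hx => ⟨0, ⟨fun _ => 0, fun _ => Hset_zero α, by simp⟩, hx0, ?_⟩⟩
    simpa using hx
  | succ m ih =>
    obtain ⟨c, hc, ih⟩ := ih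
    set β := α / (1+α) with hβ
    have hβ0 : 0 < β := by positivity
    have hβi : (1+α)/α = β⁻¹ := by rw [hβ, inv_div]
    refine ⟨min 1 ((c/α)^β), lt_min one_pos (by positivity), fun δ h0 h1 x hx0 hx => ?_⟩
    have hD1 : δ ^ (β^(m+1)) ≤ 1 := Real.rpow_le_one h0.le h1 (by positivity)
    have hD0 : 0 < δ ^ (β^(m+1)) := Real.rpow_pos_of_pos h0 _
    have hx1 : x ≤ 1 := hx.trans (mul_le_one₀ (min_le_left _ _) hD0.le hD1)
    obtain ⟨h, hh, hhx, hr⟩ := Hset_greedy α hα x hx0 hx1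
    have hx2 : x ≤ (c/α)^β * δ ^ (β^(m+1)) :=
      hx.trans (mul_le_mul_of_nonneg_right (min_le_right _ _) hD0.le)
    have hx3 : x ^ ((1+α)/α) ≤ (c/α) * δ ^ (β^m) := by
      rw [hβi]
      calc x ^ β⁻¹ ≤ ((c/α)^β * δ ^ (β^(m+1))) ^ β⁻¹ :=
            Real.rpow_le_rpow hx0 hx2 (by positivity)
        _ = _ := by
            rw [Real.mul_rpow (by positivity) hD0.le, ← Real.rpow_mul (by positivity),
              ← Real.rpow_mul h0.le, mul_inv_cancel₀ hβ0.ne', Real.rpow_one, pow_succ,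
              mul_assoc, mul_inv_cancel₀ hβ0.ne', mul_one]
    have hr2 : x - h ≤ c * δ ^ (β^m) := by
      refine hr.trans ((mul_le_mul_of_nonneg_left hx3 hα.le).trans (le_of_eq ?_))
      field_simp
    obtain ⟨y, ⟨a, ha, rfl⟩, hy1, hy2⟩ := ih δ h0 h1 (x-h) (by linarith) hr2
    refine ⟨h + ∑ i, a i, ⟨Fin.cons h a, ?_, by simp [Fin.sum_univ_succ]⟩, by linarith, by linarith⟩
    intro i
    refine Fin.cases ?_ (fun j => ?_) i
    · simpa using hh
    · simpa using ha j

lemma upper_step (α : ℝ) (hα : 0 < α) (m : ℕ) (δ : ℝ) (N : ℕ) (hN : 0 < N) :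
    closedNbhd (HsumSet α (m+1)) δ ⊆
      (⋃ n ∈ Finset.Icc 1 N, (fun x => -(1 / (n:ℝ)^α) + x) ⁻¹' (closedNbhd (HsumSet α m) δ)) ∪
        Set.Icc (-δ) ((m+1) * (N:ℝ)^(-α) + δ) := by
  rintro x ⟨y, ⟨a, ha, rfl⟩, hxy⟩
  by_cases hex : ∃ i, ∃ n : ℕ, 0 < n ∧ n ≤ N ∧ a i = 1 / (n:ℝ)^α
  · left
    obtain ⟨i, n, hn0, hnN, hai⟩ := hex
    simp only [Set.mem_iUnion]
    refine ⟨n, Finset.mem_Icc.2 ⟨hn0, hnN⟩, ∑ j, a (i.succAbove j),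
      ⟨fun j => a (i.succAbove j), fun j => ha _, rfl⟩, ?_⟩
    rw [Fin.sum_univ_succAbove a i, hai] at hxy
    convert hxy using 2
    ring
  · right
    push Not at hex
    have hb : ∀ i, 0 ≤ a i ∧ a i ≤ (N:ℝ)^(-α) := by
      intro i
      rcases ha i with h | ⟨n, hn, h⟩
      · rw [Set.mem_singleton_iff] at h
        rw [h]
        exact ⟨le_rfl, by positivity⟩
      · have hNn : N < n := by
          by_contra hcon
          exact hex i n hn (not_lt.1 hcon) h
        rw [h]
        refine ⟨by positivity, ?_⟩
        rw [one_div, ← Real.rpow_neg (by positivity)]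
        exact Real.rpow_le_rpow_of_nonpos (by exact_mod_cast hN) (by exact_mod_cast hNn.le) (by linarith)
    have h1 : 0 ≤ ∑ i, a i := Finset.sum_nonneg fun i _ => (hb i).1
    have h2 : ∑ i, a i ≤ (m+1) * (N:ℝ)^(-α) := by
      refine (Finset.sum_le_sum fun i _ => (hb i).2).trans (le_of_eq ?_)
      simp
    rw [abs_le] at hxy
    exact ⟨by linarith, by linarith⟩

lemma upper_bound (α : ℝ) (hα : 0 < α) (m : ℕ) : ∃ C : ℝ, 0 < C ∧ ∀ δ : ℝ, 0 < δ → δ ≤ 1 →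
    volume (closedNbhd (HsumSet α m) δ) ≤ ENNReal.ofReal (C * δ ^ ((α / (1 + α)) ^ m)) := by
  induction m with
  | zero =>
    refine ⟨2, two_pos, fun δ h0 h1 => ?_⟩
    have : closedNbhd (HsumSet α 0) δ ⊆ Set.Icc (-δ) δ := by
      rintro x ⟨y, ⟨a, ha, rfl⟩, hxy⟩
      simpa [abs_le] using hxy
    refine (measure_mono this).trans ?_
    rw [Real.volume_Icc]
    apply ENNReal.ofReal_le_ofReal
    simp only [pow_zero, Real.rpow_one]
    linarith
  | succ m ih =>
    obtain ⟨C, hC, ih⟩ := ih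
    set β := α / (1+α) with hβ
    have hβ0 : 0 < β := by positivity
    have hβ1 : β ≤ 1 := by rw [hβ, div_le_one (by positivity)]; linarith
    refine ⟨2 * C + (m+1) + 2, by positivity, fun δ h0 h1 => ?_⟩
    set D := δ ^ (β^m) with hD
    have hD0 : 0 < D := Real.rpow_pos_of_pos h0 _
    have hD1 : D ≤ 1 := Real.rpow_le_one h0.le h1 (by positivity)
    have hDβ : δ ^ (β^(m+1)) = D ^ β := by
      rw [hD, ← Real.rpow_mul h0.le, pow_succ]
    set t := D ^ (-(1/(1+α))) with ht
    have ht0 : 0 < t := Real.rpow_pos_of_pos hD0 _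
    have ht1 : 1 ≤ t := Real.one_le_rpow_of_pos_of_le_one_of_nonpos hD0 hD1 (by
      have : 0 < 1/(1+α) := by positivity
      linarith)
    have htD : t * D = D ^ β := by
      have hadd := Real.rpow_add hD0 (-(1/(1+α))) 1
      rw [Real.rpow_one] at hadd
      rw [ht, ← hadd]
      congr 1
      rw [hβ]; field_simp; ring
    have htα : t ^ (-α) = D ^ β := by
      rw [ht, ← Real.rpow_mul hD0.le]
      congr 1
      rw [hβ]; field_simp
    set N := ⌈t⌉₊ with hNdef
    have hn1 : t ≤ (N : ℝ) := Nat.le_ceil t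
    have hn2 : (N : ℝ) ≤ 2 * t := by
      have := (Nat.ceil_lt_add_one ht0.le).le
      linarith
    have hN : 0 < N := Nat.ceil_pos.2 ht0
    have hNα : (N:ℝ)^(-α) ≤ D ^ β := htα ▸ Real.rpow_le_rpow_of_nonpos ht0 hn1 (by linarith)
    have hδ : δ ≤ D ^ β := by
      rw [← hDβ]
      conv_lhs => rw [← Real.rpow_one δ]
      exact Real.rpow_le_rpow_of_exponent_ge h0 h1 (pow_le_one₀ hβ0.le hβ1)
    rw [hDβ]
    calc volume (closedNbhd (HsumSet α (m+1)) δ)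
        ≤ _ := measure_mono (upper_step α hα m δ N hN)
      _ ≤ _ := measure_union_le _ _
      _ ≤ (∑ n ∈ Finset.Icc 1 N, ENNReal.ofReal (C * D))
          + ENNReal.ofReal ((m+1) * D^β + 2 * D^β) := by
        refine add_le_add ((measure_biUnion_finset_le _ _).trans (Finset.sum_le_sum fun n _ => ?_)) ?_
        · rw [measure_preimage_add]
          exact ih δ h0 h1
        · rw [Real.volume_Icc]
          apply ENNReal.ofReal_le_ofReal
          have : ((m:ℝ)+1) * (N:ℝ)^(-α) ≤ (m+1) * D^β :=
            mul_le_mul_of_nonneg_left hNα (by positivity)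
          linarith
      _ = ENNReal.ofReal (N * (C * D) + ((m+1) * D^β + 2 * D^β)) := by
        rw [ENNReal.ofReal_add (p := (N:ℝ) * (C * D)) (by positivity) (by positivity),
          ENNReal.ofReal_mul (p := (N:ℝ)) (by positivity), ENNReal.ofReal_natCast,
          Finset.sum_const, Nat.card_Icc, nsmul_eq_mul, Nat.add_sub_cancel]
      _ ≤ _ := by
        apply ENNReal.ofReal_le_ofReal
        have : (N:ℝ) * (C * D) ≤ 2 * t * (C * D) := mul_le_mul_of_nonneg_right hn2 (by positivity)
        have e : 2 * t * (C * D) = 2 * C * D^β := by rw [← htD]; ring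
        nlinarith

/-- For `α > 0`, the Minkowski dimension of `H^α_m` is `1 - (α/(1+α))^m`:
`lim_{δ → 0⁺} log λ(V_δ(H^α_m)) / log δ = (α/(1+α))^m`. -/
theorem minkowski_dim_Ham (α : ℝ) (hα : 0 < α) (m : ℕ) (hm : 0 < m) :
    Tendsto
      (fun δ : ℝ => Real.log (volume (closedNbhd (HsumSet α m) δ)).toReal / Real.log δ)
      (nhdsWithin (0 : ℝ) (Set.Ioi 0)) (nhds ((α / (1 + α)) ^ m)) := by
  obtain ⟨c, hc, hlow⟩ := lower_cover α hα m
  obtain ⟨C, hC, hup⟩ := upper_bound α hα m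
  set p := (α / (1 + α)) ^ m with hp
  have hlog : Tendsto Real.log (nhdsWithin (0 : ℝ) (Set.Ioi 0)) atBot :=
    Real.tendsto_log_nhdsGT_zero
  have hlim : ∀ k : ℝ, Tendsto (fun δ : ℝ => k / Real.log δ + p)
      (nhdsWithin (0 : ℝ) (Set.Ioi 0)) (nhds p) := by
    intro k
    simpa using (hlog.const_div_atBot k).add_const p
  have hev : ∀ᶠ δ : ℝ in nhdsWithin (0 : ℝ) (Set.Ioi 0), δ ∈ Set.Ioo (0:ℝ) 1 :=
    Ioo_mem_nhdsGT one_pos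
  have key : ∀ δ ∈ Set.Ioo (0:ℝ) 1,
      Real.log c + p * Real.log δ ≤ Real.log (volume (closedNbhd (HsumSet α m) δ)).toReal ∧
      Real.log (volume (closedNbhd (HsumSet α m) δ)).toReal ≤ Real.log C + p * Real.log δ := by
    rintro δ ⟨h0, h1⟩
    have hu := hup δ h0 h1.le
    have hD0 : 0 < δ ^ p := Real.rpow_pos_of_pos h0 _
    have hl : ENNReal.ofReal (c * δ ^ p) ≤ volume (closedNbhd (HsumSet α m) δ) := by
      have : Set.Icc 0 (c * δ ^ p) ⊆ closedNbhd (HsumSet α m) δ := by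
        rintro x ⟨hx0, hx1⟩
        obtain ⟨y, hy, h2, h3⟩ := hlow δ h0 h1.le x hx0 hx1
        exact ⟨y, hy, by rw [abs_of_nonneg (by linarith)]; exact h3⟩
      have h := measure_mono (μ := volume) this
      rwa [Real.volume_Icc, sub_zero] at h
    have hne : volume (closedNbhd (HsumSet α m) δ) ≠ ⊤ := ne_top_of_le_ne_top ENNReal.ofReal_ne_top hu
    have hl' := (ENNReal.ofReal_le_iff_le_toReal hne).1 hl
    have hu' := ENNReal.toReal_le_of_le_ofReal (by positivity) hu
    have hcp : 0 < c * δ ^ p := by positivity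
    have e : ∀ k : ℝ, 0 < k → Real.log (k * δ ^ p) = Real.log k + p * Real.log δ := by
      intro k hk
      rw [Real.log_mul hk.ne' hD0.ne', Real.log_rpow h0]
    rw [← e c hc, ← e C hC]
    exact ⟨Real.log_le_log hcp hl', Real.log_le_log (hcp.trans_le hl') hu'⟩
  refine tendsto_of_tendsto_of_tendsto_of_le_of_le' (hlim (Real.log C)) (hlim (Real.log c)) ?_ ?_
  · filter_upwards [hev] with δ hδ
    have hneg : Real.log δ < 0 := Real.log_neg hδ.1 hδ.2
    rw [le_div_iff_of_neg hneg, add_mul, div_mul_cancel₀ _ hneg.ne]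
    exact (key δ hδ).2
  · filter_upwards [hev] with δ hδ
    have hneg : Real.log δ < 0 := Real.log_neg hδ.1 hδ.2
    rw [div_le_iff_of_neg hneg, add_mul, div_mul_cancel₀ _ hneg.ne]
    exact (key δ hδ).1
end

section
/- Let m, n be positive integers and let a ∈ S_k with 0 ≤ k < m satisfy π(a) ≤ n^m, and set θ_{m,n}(a) = n^m / π(a). Then for every integer ℓ > θ_{m,n}(a) and every word b ∈ T_{m, aℓ}, where aℓ denotes a with the letter ℓ appended, one has |g(b) − g(a)| ≤ θ_{m,n}(a) / n^{2m}. -/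
open Set

/-- The value `g(a₁ ⋯ a_k) = 1/(a₁ + 1/(a₂ + ⋯ + 1/a_k))` of a finite continued fraction,
with `g(∅) = 0`. -/
noncomputable def cfVal : List ℕ → ℝ
  | [] => 0
  | a :: t => 1 / ((a : ℝ) + cfVal t)

/-- A word of positive integers whose last letter (if any) is at least `2`
(so a member of `S_k` when it has length `k`). -/
def isCFWord (a : List ℕ) : Prop := (∀ x ∈ a, 1 ≤ x) ∧ ∀ ℓ ∈ a.getLast?, 2 ≤ ℓ

lemma cfVal_nonneg (a : List ℕ) : 0 ≤ cfVal a := by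
  induction a with
  | nil => simp [cfVal]
  | cons x t ih => simp only [cfVal]; positivity

lemma cfVal_append_sub (a t : List ℕ) (h : ∀ x ∈ a, 1 ≤ x) :
    |cfVal (a ++ t) - cfVal a| ≤ cfVal t / (a.prod : ℝ) ^ 2 := by
  induction a with
  | nil => simp [cfVal, abs_of_nonneg (cfVal_nonneg t)]
  | cons x s ih =>
    have ih := ih (fun y hy => h y (List.mem_cons_of_mem _ hy))
    have hx : (0 : ℝ) < x := by exact_mod_cast h x List.mem_cons_self
    have hu := cfVal_nonneg (s ++ t)
    have hv := cfVal_nonneg s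
    simp only [List.cons_append, cfVal, List.prod_cons, Nat.cast_mul]
    have e : 1 / ((x : ℝ) + cfVal (s ++ t)) - 1 / ((x : ℝ) + cfVal s)
        = -(cfVal (s ++ t) - cfVal s) / (((x : ℝ) + cfVal (s ++ t)) * ((x : ℝ) + cfVal s)) := by
      field_simp
      ring
    rw [e, abs_div, abs_neg, abs_of_pos (by positivity :
      0 < ((x : ℝ) + cfVal (s ++ t)) * ((x : ℝ) + cfVal s))]
    calc _ ≤ |cfVal (s ++ t) - cfVal s| / ((x : ℝ) * x) := by
          gcongr <;> linarith
      _ ≤ (cfVal t / (s.prod : ℝ) ^ 2) / ((x : ℝ) * x) := by gcongr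
      _ = _ := by rw [div_div]; congr 1; ring

/-- Let `m, n ≥ 1`, let `a ∈ S_k` with `k < m` satisfy `π(a) ≤ n^m`, and set
`θ = n^m / π(a)`. Then for every integer `ℓ > θ` and every `b ∈ T_{m, aℓ}`
(i.e. `b ∈ S_m` having `a ++ [ℓ]` as a prefix), `|g(b) - g(a)| ≤ θ / n^(2m)`. -/
theorem cf_good_word_gap (m n : ℕ) (hm : 0 < m) (hn : 0 < n) (k : ℕ) (hk : k < m)
    (a : List ℕ) (hlen : a.length = k) (haS : isCFWord a) (hπ : a.prod ≤ n ^ m)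
    (ℓ : ℕ) (hℓ : ((n : ℝ) ^ m / (a.prod : ℝ)) < (ℓ : ℝ))
    (b : List ℕ) (hblen : b.length = m) (hbS : isCFWord b) (hpre : (a ++ [ℓ]) <+: b) :
    |cfVal b - cfVal a| ≤ ((n : ℝ) ^ m / (a.prod : ℝ)) / (n : ℝ) ^ (2 * m) := by
  obtain ⟨r, rfl⟩ := hpre
  have hP : (0 : ℝ) < (a.prod : ℝ) := by
    exact_mod_cast List.prod_pos (fun x hx => haS.1 x hx)
  have hN : (0 : ℝ) < (n : ℝ) ^ m := by positivity
  have h1 := cfVal_append_sub a (ℓ :: r) haS.1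
  rw [List.append_assoc, List.singleton_append]
  refine h1.trans ?_
  have hθ : (0 : ℝ) < (n : ℝ) ^ m / (a.prod : ℝ) := by positivity
  have h2 : cfVal (ℓ :: r) ≤ 1 / ((n : ℝ) ^ m / (a.prod : ℝ)) := by
    simp only [cfVal]
    apply one_div_le_one_div_of_le hθ
    linarith [cfVal_nonneg r]
  calc _ ≤ (1 / ((n : ℝ) ^ m / (a.prod : ℝ))) / (a.prod : ℝ) ^ 2 := by gcongr
    _ = _ := by
      rw [mul_comm 2 m, pow_mul]
      field_simp
end
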